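/- Let n ≥ 1 and 0 < α < 1. If φ is a Schwartz function on ℝⁿ×ℝ, then for every m > 0 there exists a constant C > 0 such that for all (x,t) ∈ ℝⁿ×ℝ, |D_right^α φ(x,t)| ≤ C / ((1+|x|^m)(1+|t|^{1+α})). -/

import Mathlib

open MeasureTheory Set

/-- The right Marchaud fractional derivative of order `α` in the time variable:
`D_right^α φ(x,t) = C_α ∫_t^∞ (φ(x,t) - φ(x,τ))/(τ-t)^{1+α} dτ`, `C_α = 1/|Γ(-α)|`. -/
noncomputable def marchaudRight {n : ℕ} (α : ℝ) (φ : EuclideanSpace ℝ (Fin n) × ℝ → ℝ)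
    (x : EuclideanSpace ℝ (Fin n)) (t : ℝ) : ℝ :=
  (1 / |Real.Gamma (-α)|) * ∫ τ in Ioi t, (φ (x, t) - φ (x, τ)) / (τ - t) ^ (1 + α)

/-!
Write the derivative as `C_α ∫₀^∞ u^{-(1+α)} (f t - f (t + u)) du` and split the integral at a
radius `r`. If `|f t - f (t + u)| ≤ L u` for `u ≤ r`, the near part is at most `L r^{1-α} / (1-α)`;
the far part is at most `|f t| r^{-α} / α + r^{-(1+α)} ‖f‖₁`. For `f = φ(x, ·)` take
`r = (1 + |t|) / 2`: every point `s` of `[t, t + r]` satisfies `1 + |s| ≥ r`, so rapid decay of `φ`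
and `∂_t φ` allows `L ≲ r⁻²` and `|f t| ≲ r⁻¹`, and all three terms are `O(r^{-(1+α)})`. The decay
in `x` is inherited from the constants in the bounds on `f` and `f'`, on which the estimate depends
linearly.
-/

section WeightedIntegrals

variable {F : Type*} [NormedAddCommGroup F] [NormedSpace ℝ F] {p r L : ℝ} {g : ℝ → F}

lemma integrableOn_Ioc_rpow (hp : -1 < p) (hr : 0 ≤ r) :
    IntegrableOn (fun u : ℝ => u ^ p) (Ioc 0 r) :=
  (intervalIntegrable_iff_integrableOn_Ioc_of_le hr).1
    (intervalIntegral.intervalIntegrable_rpow' hp)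

lemma setIntegral_Ioc_rpow (hp : -1 < p) (hr : 0 ≤ r) :
    ∫ u in Ioc 0 r, u ^ p = r ^ (p + 1) / (p + 1) := by
  rw [← intervalIntegral.integral_of_le hr, integral_rpow (Or.inl hp),
    Real.zero_rpow (by linarith), sub_zero]

lemma norm_rpow_smul_le_of_norm_le_mul {u : ℝ} (hu : 0 < u) {v : F} (hv : ‖v‖ ≤ L * u) :
    ‖u ^ p • v‖ ≤ L * u ^ (p + 1) :=
  calc ‖u ^ p • v‖ = u ^ p * ‖v‖ := by rw [norm_smul, Real.norm_of_nonneg (by positivity)]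
    _ ≤ u ^ p * (L * u) := by gcongr
    _ = L * u ^ (p + 1) := by rw [mul_left_comm, Real.rpow_add_one hu.ne']

lemma integrableOn_Ioc_rpow_smul (hp : -2 < p) (hr : 0 ≤ r)
    (hg : AEStronglyMeasurable g (volume.restrict (Ioc 0 r)))
    (hgL : ∀ u ∈ Ioc 0 r, ‖g u‖ ≤ L * u) : IntegrableOn (fun u => u ^ p • g u) (Ioc 0 r) :=
  ((integrableOn_Ioc_rpow (by linarith) hr).const_mul L).mono'
    ((measurable_id.pow_const p).aestronglyMeasurable.smul hg)
    (ae_restrict_of_forall_mem measurableSet_Ioc fun u hu =>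
      norm_rpow_smul_le_of_norm_le_mul hu.1 (hgL u hu))

lemma norm_setIntegral_Ioc_rpow_smul_le (hp : -2 < p) (hr : 0 ≤ r)
    (hgL : ∀ u ∈ Ioc 0 r, ‖g u‖ ≤ L * u) :
    ‖∫ u in Ioc 0 r, u ^ p • g u‖ ≤ L * (r ^ (p + 2) / (p + 2)) := by
  have hp' : -1 < p + 1 := by linarith
  calc ‖∫ u in Ioc 0 r, u ^ p • g u‖ ≤ ∫ u in Ioc 0 r, L * u ^ (p + 1) :=
        norm_integral_le_of_norm_le ((integrableOn_Ioc_rpow hp' hr).const_mul L)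
          (ae_restrict_of_forall_mem measurableSet_Ioc fun u hu =>
            norm_rpow_smul_le_of_norm_le_mul hu.1 (hgL u hu))
    _ = L * (r ^ (p + 2) / (p + 2)) := by
        rw [integral_const_mul, setIntegral_Ioc_rpow hp' hr, add_assoc, one_add_one_eq_two]

lemma norm_rpow_smul_le_of_le {u : ℝ} (hp : p ≤ 0) (hr : 0 < r) (hu : r ≤ u) (v : F) :
    ‖u ^ p • v‖ ≤ r ^ p * ‖v‖ := by
  have hu₀ : 0 ≤ u := hr.le.trans hu
  rw [norm_smul, Real.norm_of_nonneg (by positivity)]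
  exact mul_le_mul_of_nonneg_right (Real.rpow_le_rpow_of_nonpos hr hu hp) (norm_nonneg v)

lemma integrableOn_Ioi_rpow_smul (hp : p ≤ 0) (hr : 0 < r) (hg : IntegrableOn g (Ioi r)) :
    IntegrableOn (fun u => u ^ p • g u) (Ioi r) :=
  (hg.norm.const_mul (r ^ p)).mono'
    ((measurable_id.pow_const p).aestronglyMeasurable.smul hg.aestronglyMeasurable)
    (ae_restrict_of_forall_mem measurableSet_Ioi fun u hu =>
      norm_rpow_smul_le_of_le hp hr (mem_Ioi.1 hu).le (g u))

lemma norm_setIntegral_Ioi_rpow_smul_le (hp : p ≤ 0) (hr : 0 < r)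
    (hg : IntegrableOn g (Ioi r)) :
    ‖∫ u in Ioi r, u ^ p • g u‖ ≤ r ^ p * ∫ u in Ioi r, ‖g u‖ := by
  rw [← integral_const_mul]
  exact norm_integral_le_of_norm_le (hg.norm.const_mul _)
    (ae_restrict_of_forall_mem measurableSet_Ioi fun u hu =>
      norm_rpow_smul_le_of_le hp hr (mem_Ioi.1 hu).le (g u))

lemma norm_setIntegral_Ioi_rpow_smul_const_le (hp : p < -1) (hr : 0 < r) (v : F) :
    ‖∫ u in Ioi r, u ^ p • v‖ ≤ -r ^ (p + 1) / (p + 1) * ‖v‖ := by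
  rw [← integral_Ioi_rpow_of_lt hp hr, ← integral_mul_const]
  refine norm_integral_le_of_norm_le ((integrableOn_Ioi_rpow_of_lt hp hr).mul_const _)
    (ae_restrict_of_forall_mem measurableSet_Ioi fun u hu => ?_)
  rw [norm_smul, Real.norm_of_nonneg (Real.rpow_nonneg (hr.trans hu).le p)]

end WeightedIntegrals

section RightMarchaudDeriv

variable {F : Type*} [NormedAddCommGroup F] [NormedSpace ℝ F]

/-- The right Marchaud fractional derivative of order `α` of a function of one real variable.
The integration variable is the increment `u = τ - t`, so that the singular kernel does not
depend on `t`. -/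
noncomputable def rightMarchaudDeriv (α : ℝ) (f : ℝ → F) (t : ℝ) : F :=
  (1 / |Real.Gamma (-α)|) • ∫ u in Ioi 0, u ^ (-(1 + α)) • (f t - f (t + u))

lemma marchaudRight_eq_rightMarchaudDeriv {n : ℕ} (α : ℝ)
    (φ : EuclideanSpace ℝ (Fin n) × ℝ → ℝ) (x : EuclideanSpace ℝ (Fin n)) (t : ℝ) :
    marchaudRight α φ x t = rightMarchaudDeriv α (fun τ => φ (x, τ)) t := by
  have translate := (measurePreserving_add_left volume t).setIntegral_preimage_emb
    (measurableEmbedding_addLeft t)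
    (fun τ => (φ (x, t) - φ (x, τ)) / (τ - t) ^ (1 + α)) (Ioi t)
  rw [preimage_const_add_Ioi, sub_self] at translate
  rw [marchaudRight, rightMarchaudDeriv, smul_eq_mul, ← translate]
  congr 1
  refine setIntegral_congr_fun measurableSet_Ioi fun u hu => ?_
  simp only [add_sub_cancel_left, smul_eq_mul]
  rw [Real.rpow_neg (mem_Ioi.1 hu).le, div_eq_inv_mul]

variable {α r L : ℝ} {f : ℝ → F} {t : ℝ}

lemma norm_setIntegral_Ioc_marchaud_le (hα : α < 1) (hr : 0 ≤ r)
    (hL : ∀ u ∈ Ioc 0 r, ‖f t - f (t + u)‖ ≤ L * u) :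
    ‖∫ u in Ioc 0 r, u ^ (-(1 + α)) • (f t - f (t + u))‖ ≤ L * (r ^ (1 - α) / (1 - α)) := by
  have hexp : -(1 + α) + 2 = 1 - α := by ring
  simpa only [hexp] using
    norm_setIntegral_Ioc_rpow_smul_le (p := -(1 + α)) (by linarith) hr hL

lemma integrableOn_Ioi_marchaud (hα : 0 < α) (hr : 0 < r) (hf : Integrable f) :
    IntegrableOn (fun u => u ^ (-(1 + α)) • (f t - f (t + u))) (Ioi r) := by
  simp only [smul_sub]
  exact ((integrableOn_Ioi_rpow_of_lt (by linarith) hr).smul_const (f t)).sub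
    (integrableOn_Ioi_rpow_smul (by linarith) hr (hf.comp_add_left t).integrableOn)

lemma norm_setIntegral_Ioi_marchaud_le (hα : 0 < α) (hr : 0 < r) (hf : Integrable f) :
    ‖∫ u in Ioi r, u ^ (-(1 + α)) • (f t - f (t + u))‖ ≤
      r ^ (-α) / α * ‖f t‖ + r ^ (-(1 + α)) * ∫ s, ‖f s‖ := by
  have hft : Integrable fun u => f (t + u) := hf.comp_add_left t
  have hmass : ∫ u in Ioi r, ‖f (t + u)‖ ≤ ∫ s, ‖f s‖ :=
    (setIntegral_le_integral hft.norm (.of_forall fun _ => norm_nonneg _)).trans_eq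
      (integral_add_left_eq_self (fun s => ‖f s‖) t)
  have hconst : ‖∫ u in Ioi r, u ^ (-(1 + α)) • f t‖ ≤ r ^ (-α) / α * ‖f t‖ := by
    have hexp : -(1 + α) + 1 = -α := by ring
    simpa only [hexp, neg_div_neg_eq] using
      norm_setIntegral_Ioi_rpow_smul_const_le (p := -(1 + α)) (by linarith) hr (f t)
  simp only [smul_sub]
  rw [integral_sub ((integrableOn_Ioi_rpow_of_lt (by linarith) hr).smul_const (f t))
    (integrableOn_Ioi_rpow_smul (by linarith) hr hft.integrableOn)]
  refine (norm_sub_le _ _).trans (add_le_add hconst ?_)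
  refine (norm_setIntegral_Ioi_rpow_smul_le (by linarith) hr hft.integrableOn).trans ?_
  gcongr

theorem norm_rightMarchaudDeriv_le (hα₀ : 0 < α) (hα₁ : α < 1) (hr : 0 < r) (hf : Integrable f)
    (hL : ∀ u ∈ Ioc 0 r, ‖f t - f (t + u)‖ ≤ L * u) :
    ‖rightMarchaudDeriv α f t‖ ≤ 1 / |Real.Gamma (-α)| *
      (L * (r ^ (1 - α) / (1 - α)) +
        (r ^ (-α) / α * ‖f t‖ + r ^ (-(1 + α)) * ∫ s, ‖f s‖)) := by
  have hmeas : AEStronglyMeasurable (fun u => f t - f (t + u)) (volume.restrict (Ioc 0 r)) :=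
    (aestronglyMeasurable_const.sub (hf.comp_add_left t).aestronglyMeasurable).restrict
  rw [rightMarchaudDeriv, norm_smul, Real.norm_of_nonneg (by positivity),
    ← Ioc_union_Ioi_eq_Ioi hr.le, setIntegral_union Ioc_disjoint_Ioi_same measurableSet_Ioi
      (integrableOn_Ioc_rpow_smul (by linarith) hr.le hmeas hL)
      (integrableOn_Ioi_marchaud hα₀ hr hf)]
  gcongr
  exact norm_add_le_of_le (norm_setIntegral_Ioc_marchaud_le hα₁ hr.le hL)
    (norm_setIntegral_Ioi_marchaud_le hα₀ hr hf)

end RightMarchaudDeriv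

section QuadraticDecay

variable {F : Type*} [NormedAddCommGroup F] {f : ℝ → F} {K : ℝ}

lemma div_one_add_abs_sq_le_mul_inv (hK : 0 ≤ K) (s : ℝ) :
    K / (1 + |s|) ^ 2 ≤ K * (1 + s ^ 2)⁻¹ := by
  rw [← div_eq_mul_inv]
  gcongr
  nlinarith [abs_nonneg s, sq_abs s]

lemma nonneg_of_norm_le_div_one_add_abs_sq (hf : ∀ s, ‖f s‖ ≤ K / (1 + |s|) ^ 2) : 0 ≤ K := by
  simpa using (norm_nonneg _).trans (hf 0)

lemma integrable_of_norm_le_div_one_add_abs_sq (hmeas : AEStronglyMeasurable f)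
    (hf : ∀ s, ‖f s‖ ≤ K / (1 + |s|) ^ 2) : Integrable f :=
  (integrable_inv_one_add_sq.const_mul K).mono' hmeas (.of_forall fun s => (hf s).trans
    (div_one_add_abs_sq_le_mul_inv (nonneg_of_norm_le_div_one_add_abs_sq hf) s))

lemma integral_norm_le_of_norm_le_div_one_add_abs_sq (hf : ∀ s, ‖f s‖ ≤ K / (1 + |s|) ^ 2) :
    ∫ s, ‖f s‖ ≤ K * Real.pi := by
  rw [← integral_univ_inv_one_add_sq, ← integral_const_mul]
  exact integral_mono_of_nonneg (.of_forall fun s => norm_nonneg _)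
    (integrable_inv_one_add_sq.const_mul K) (.of_forall fun s => (hf s).trans
      (div_one_add_abs_sq_le_mul_inv (nonneg_of_norm_le_div_one_add_abs_sq hf) s))

lemma half_one_add_abs_le_one_add_abs {t s : ℝ} (hs : |s - t| ≤ (1 + |t|) / 2) :
    (1 + |t|) / 2 ≤ 1 + |s| := by
  have := abs_sub_abs_le_abs_sub t s
  rw [abs_sub_comm] at this
  linarith

variable [NormedSpace ℝ F]

lemma norm_sub_le_of_norm_deriv_le_div_one_add_abs_sq (hd : Differentiable ℝ f)
    (hf' : ∀ s, ‖deriv f s‖ ≤ K / (1 + |s|) ^ 2) {t u : ℝ} (hu : u ∈ Ioc 0 ((1 + |t|) / 2)) :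
    ‖f t - f (t + u)‖ ≤ K / ((1 + |t|) / 2) ^ 2 * u := by
  have hK : 0 ≤ K := nonneg_of_norm_le_div_one_add_abs_sq hf'
  have hbound : ∀ s ∈ Icc t (t + u), ‖deriv f s‖ ≤ K / ((1 + |t|) / 2) ^ 2 := by
    intro s hs
    have hst : (1 + |t|) / 2 ≤ 1 + |s| := half_one_add_abs_le_one_add_abs <| by
      rw [abs_of_nonneg (sub_nonneg.2 hs.1)]
      linarith [hs.2, hu.2]
    exact (hf' s).trans (by gcongr)
  have hle : t ≤ t + u := by linarith [hu.1]
  simpa [abs_of_pos hu.1] using (convex_Icc t (t + u)).norm_image_sub_le_of_norm_deriv_le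
    (fun s _ => hd s) hbound (right_mem_Icc.2 hle) (left_mem_Icc.2 hle)

lemma near_add_far_eq_mul_rpow {r : ℝ} (hr : 0 < r) (α K M : ℝ) :
    K / r ^ 2 * (r ^ (1 - α) / (1 - α)) + (r ^ (-α) / α * (K / r) + r ^ (-(1 + α)) * (K * M)) =
      (1 / (1 - α) + 1 / α + M) * K * r ^ (-(1 + α)) := by
  have hnear : r ^ (1 - α) = r ^ (-(1 + α)) * r ^ 2 := by
    rw [← Real.rpow_natCast, ← Real.rpow_add hr]
    congr 1
    push_cast
    ring
  have hmid : r ^ (-α) = r ^ (-(1 + α)) * r := by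
    rw [← Real.rpow_add_one hr.ne']
    congr 1
    ring
  rw [hnear, hmid]
  calc _ = (1 / (1 - α) * (r ^ 2 / r ^ 2) + 1 / α * (r / r) + M) * K * r ^ (-(1 + α)) := by ring
    _ = _ := by rw [div_self (pow_ne_zero 2 hr.ne'), div_self hr.ne', mul_one, mul_one]

theorem norm_rightMarchaudDeriv_le_of_quadratic_decay {α : ℝ} (hα₀ : 0 < α) (hα₁ : α < 1)
    (hd : Differentiable ℝ f) (hf : ∀ s, ‖f s‖ ≤ K / (1 + |s|) ^ 2)
    (hf' : ∀ s, ‖deriv f s‖ ≤ K / (1 + |s|) ^ 2) (t : ℝ) :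
    ‖rightMarchaudDeriv α f t‖ ≤
      2 ^ (1 + α) / |Real.Gamma (-α)| * (1 / (1 - α) + 1 / α + Real.pi) * K /
        (1 + |t|) ^ (1 + α) := by
  have hK : 0 ≤ K := nonneg_of_norm_le_div_one_add_abs_sq hf
  have hT : 1 ≤ 1 + |t| := by linarith [abs_nonneg t]
  have hT₀ : 0 < 1 + |t| := by positivity
  set r := (1 + |t|) / 2 with hr_def
  have hr : 0 < r := by positivity
  have hft : ‖f t‖ ≤ K / r := (hf t).trans <| by
    gcongr
    nlinarith
  have hmass : ∫ s, ‖f s‖ ≤ K * Real.pi := integral_norm_le_of_norm_le_div_one_add_abs_sq hf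
  have hscale : r ^ (-(1 + α)) = 2 ^ (1 + α) / (1 + |t|) ^ (1 + α) := by
    rw [Real.rpow_neg hr.le, Real.div_rpow hT₀.le zero_le_two, inv_div]
  calc ‖rightMarchaudDeriv α f t‖
      ≤ 1 / |Real.Gamma (-α)| * (K / r ^ 2 * (r ^ (1 - α) / (1 - α)) +
          (r ^ (-α) / α * ‖f t‖ + r ^ (-(1 + α)) * ∫ s, ‖f s‖)) :=
        norm_rightMarchaudDeriv_le hα₀ hα₁ hr
          (integrable_of_norm_le_div_one_add_abs_sq hd.continuous.aestronglyMeasurable hf)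
          fun u hu => norm_sub_le_of_norm_deriv_le_div_one_add_abs_sq hd hf' hu
    _ ≤ 1 / |Real.Gamma (-α)| * (K / r ^ 2 * (r ^ (1 - α) / (1 - α)) +
          (r ^ (-α) / α * (K / r) + r ^ (-(1 + α)) * (K * Real.pi))) := by gcongr
    _ = 2 ^ (1 + α) / |Real.Gamma (-α)| * (1 / (1 - α) + 1 / α + Real.pi) * K /
          (1 + |t|) ^ (1 + α) := by
        rw [near_add_far_eq_mul_rpow hr, hscale]
        ring

end QuadraticDecay

lemma one_add_rpow_le_two_mul_rpow {a p q : ℝ} (ha : 0 ≤ a) (hp : 0 ≤ p) (hpq : p ≤ q) :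
    1 + a ^ p ≤ 2 * (1 + a) ^ q := by
  have hone : 1 ≤ (1 + a) ^ q := Real.one_le_rpow (by linarith) (hp.trans hpq)
  have hpow : a ^ p ≤ (1 + a) ^ q :=
    (Real.rpow_le_rpow ha (by linarith) hp).trans
      (Real.rpow_le_rpow_of_exponent_le (by linarith) hpq)
  linarith

lemma abs_Gamma_neg_pos {α : ℝ} (hα₀ : 0 < α) (hα₁ : α < 1) : 0 < |Real.Gamma (-α)| := by
  refine abs_pos.2 (Real.Gamma_ne_zero fun m hm => ?_)
  have hαm : α = m := neg_injective hm
  rw [hαm] at hα₀ hα₁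
  norm_cast at hα₀ hα₁
  lia

section Schwartz

variable {E F G : Type*} [NormedAddCommGroup E] [NormedSpace ℝ E] [NormedAddCommGroup F]
  [NormedSpace ℝ F] [NormedAddCommGroup G] [NormedSpace ℝ G]

lemma exists_norm_iteratedFDeriv_prod_le (φ : SchwartzMap (E × G) F) (k l n : ℕ) :
    ∃ A > 0, ∀ i ≤ n, ∀ x y,
      ‖iteratedFDeriv ℝ i φ (x, y)‖ ≤ A / (1 + ‖x‖) ^ k / (1 + ‖y‖) ^ l := by
  refine ⟨2 ^ (k + l) *
    ((Finset.Iic (k + l, n)).sup fun m => SchwartzMap.seminorm ℝ m.1 m.2) φ + 1, by positivity,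
    fun i hi x y => ?_⟩
  have hsemi := SchwartzMap.one_add_le_sup_seminorm_apply (𝕜 := ℝ) (m := (k + l, n)) le_rfl hi φ
    (x, y)
  have hx : ‖x‖ ≤ ‖(x, y)‖ := norm_fst_le (x, y)
  have hy : ‖y‖ ≤ ‖(x, y)‖ := norm_snd_le (x, y)
  rw [div_div, le_div_iff₀ (by positivity), mul_comm]
  refine le_trans ?_ (hsemi.trans (le_add_of_nonneg_right zero_le_one))
  rw [pow_add]
  gcongr

lemma norm_deriv_comp_prodMk_le {φ : E × ℝ → F} {x : E} {s : ℝ}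
    (hφ : DifferentiableAt ℝ φ (x, s)) :
    ‖deriv (fun τ => φ (x, τ)) s‖ ≤ ‖fderiv ℝ φ (x, s)‖ := by
  have hderiv : HasDerivAt (fun τ => φ (x, τ)) (fderiv ℝ φ (x, s) (0, 1)) s :=
    hφ.hasFDerivAt.comp_hasDerivAt s ((hasDerivAt_const s x).prodMk (hasDerivAt_id s))
  rw [hderiv.deriv]
  simpa using (fderiv ℝ φ (x, s)).le_opNorm (0, 1)

lemma exists_norm_slice_le (φ : SchwartzMap (E × ℝ) F) (k l : ℕ) :
    ∃ A > 0, ∀ x s, ‖φ (x, s)‖ ≤ A / (1 + ‖x‖) ^ k / (1 + |s|) ^ l ∧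
      ‖deriv (fun τ => φ (x, τ)) s‖ ≤ A / (1 + ‖x‖) ^ k / (1 + |s|) ^ l := by
  obtain ⟨A, hA, hφ⟩ := exists_norm_iteratedFDeriv_prod_le φ k l 1
  refine ⟨A, hA, fun x s => ⟨by simpa using hφ 0 zero_le_one x s, ?_⟩⟩
  refine (norm_deriv_comp_prodMk_le φ.differentiableAt).trans ?_
  simpa [norm_iteratedFDeriv_one] using hφ 1 le_rfl x s

theorem decay_estimate_marchaud_right_general [CompleteSpace F] {α : ℝ} (hα₀ : 0 < α)
    (hα₁ : α < 1) (φ : SchwartzMap (E × ℝ) F) {m : ℝ} (hm : 0 ≤ m) :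
    ∃ C > 0, ∀ x t, ‖rightMarchaudDeriv α (fun τ => φ (x, τ)) t‖ ≤
      C / ((1 + ‖x‖ ^ m) * (1 + |t| ^ (1 + α))) := by
  obtain ⟨A, hA, hφ⟩ := exists_norm_slice_le φ ⌈m⌉₊ 2
  have hΓ : 0 < |Real.Gamma (-α)| := abs_Gamma_neg_pos hα₀ hα₁
  have : 0 < 1 - α := sub_pos.2 hα₁
  set c := 2 ^ (1 + α) / |Real.Gamma (-α)| * (1 / (1 - α) + 1 / α + Real.pi)
  have hc : 0 < c := by positivity
  refine ⟨4 * c * A, by positivity, fun x t => ?_⟩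
  have hx : 1 + ‖x‖ ^ m ≤ 2 * (1 + ‖x‖) ^ ⌈m⌉₊ := by
    simpa using one_add_rpow_le_two_mul_rpow (norm_nonneg x) hm (Nat.le_ceil m)
  have ht : 1 + |t| ^ (1 + α) ≤ 2 * (1 + |t|) ^ (1 + α) :=
    one_add_rpow_le_two_mul_rpow (abs_nonneg t) (by linarith) le_rfl
  have hd : Differentiable ℝ fun τ => φ (x, τ) :=
    φ.differentiable.comp (differentiable_const x |>.prodMk differentiable_id)
  calc ‖rightMarchaudDeriv α (fun τ => φ (x, τ)) t‖
      ≤ c * (A / (1 + ‖x‖) ^ ⌈m⌉₊) / (1 + |t|) ^ (1 + α) :=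
        norm_rightMarchaudDeriv_le_of_quadratic_decay hα₀ hα₁ hd (fun s => (hφ x s).1)
          (fun s => (hφ x s).2) t
    _ = 4 * c * A / ((2 * (1 + ‖x‖) ^ ⌈m⌉₊) * (2 * (1 + |t|) ^ (1 + α))) := by
        field_simp
        ring
    _ ≤ 4 * c * A / ((1 + ‖x‖ ^ m) * (1 + |t| ^ (1 + α))) := by gcongr

end Schwartz

/-- decay estimate for the right Marchaud derivative of a Schwartz function:
for every `m > 0`, `|D_right^α φ(x,t)| ≤ C / ((1+|x|^m)(1+|t|^{1+α}))`. -/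
theorem decay_estimate_marchaud_right
    (n : ℕ) (hn : 1 ≤ n) (α : ℝ) (hα0 : 0 < α) (hα1 : α < 1)
    (φ : SchwartzMap (EuclideanSpace ℝ (Fin n) × ℝ) ℝ) :
    ∀ m > (0 : ℝ), ∃ C > (0 : ℝ), ∀ (x : EuclideanSpace ℝ (Fin n)) (t : ℝ),
      |marchaudRight α (⇑φ) x t| ≤ C / ((1 + ‖x‖ ^ m) * (1 + |t| ^ (1 + α))) := by
  intro m hm
  simpa only [marchaudRight_eq_rightMarchaudDeriv, Real.norm_eq_abs] using
    decay_estimate_marchaud_right_general hα0 hα1 φ hm.le
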